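/- arXiv:1607.01215 — 2 statements merged into one kernel-verified Lean document; each statement's English description precedes it below -/
import Mathlib

section
/- The volume of the set of real qubit channels 𝒬_ℝ (identified with a convex subset of ℝ⁷ via the parametrization of the Choi matrix with entries a,b,c,d,e,f,g ∈ ℝ, a,f ∈ [0,1], subject to positive semidefiniteness) with respect to the 7-dimensional Lebesgue measure (with the volume element 2⁴ dλ₇ coming from the Euclidean structure on self-adjoint matrices) equals 4π³/105. -/
open MeasureTheory Real

/-- The Choi matrix of a real qubit channel with parameters `(a,b,c,d,e,f,g) ∈ ℝ⁷`. -/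
noncomputable def choiR (v : Fin 7 → ℝ) : Matrix (Fin 4) (Fin 4) ℝ :=
  !![v 0, v 1, v 2, v 3;
     v 1, 1 - v 0, v 4, -(v 2);
     v 2, v 4, v 5, v 6;
     v 3, -(v 2), v 6, 1 - v 5]

/-!
Reordering the basis turns the Choi matrix into the block matrix `[A, B; Bᵀ, 1 - A]` with `A`
symmetric and `B` arbitrary. If `A` and `1 - A` are positive definite, then it is positive
semidefinite exactly when `B = √A * X * √(1 - A)` with `X` a contraction, so the admissible `B` form
a set of volume `det A * det (1 - A) * V`, where `V` is the volume of the `2 × 2` contractions.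

Written as `x ↦ z * x + w * conj x` on the plane, a matrix is a contraction if and only if
`‖z‖ + ‖w‖ ≤ 1`; these coordinates have Jacobian `4`, hence `V = 4 * (π² / 6)`. For
`A = [t + z.re, z.im; z.im, t - z.re]` the determinants are `t² - ‖z‖²` and `(1 - t)² - ‖z‖²`, so
the remaining integral over `A`, which is `2 * (π / 560)`, is radial in `z`.
-/

open scoped ENNReal Matrix Kronecker

section MeasurePreserving

variable {ι κ τ : Type*} [Fintype ι] [Fintype κ] [Fintype τ]

lemma measurePreserving_uncurry {α : Type*} [MeasureSpace α] [SigmaFinite (volume : Measure α)] :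
    MeasurePreserving (fun f : ι → κ → α => Function.uncurry f) := by
  have hm : Measurable (fun f : ι → κ → α => Function.uncurry f) :=
    measurable_pi_lambda _ fun p => (measurable_pi_apply p.2).comp (measurable_pi_apply p.1)
  refine ⟨hm, (Measure.pi_eq fun s hs => ?_).symm⟩
  have hpre : (fun f : ι → κ → α => Function.uncurry f) ⁻¹' Set.univ.pi s =
      Set.univ.pi fun i => Set.univ.pi fun j => s (i, j) := by
    ext f
    simp [Set.mem_pi, Function.uncurry]
  rw [Measure.map_apply hm (.univ_pi hs), hpre]
  simp only [volume_pi_pi, Fintype.prod_prod_type]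

lemma measurePreserving_sumElim_comp_symm {α : Type*} [MeasureSpace α]
    [SigmaFinite (volume : Measure α)] (e : ι ⊕ κ ≃ τ) :
    MeasurePreserving fun p : (ι → α) × (κ → α) => Sum.elim p.1 p.2 ∘ e.symm := by
  have heq : (fun p : (ι → α) × (κ → α) => Sum.elim p.1 p.2 ∘ e.symm) =
      MeasurableEquiv.piCongrLeft (fun _ => α) e ∘
        (MeasurableEquiv.sumPiEquivProdPi fun _ : ι ⊕ κ => α).symm := by
    funext p k
    obtain ⟨i, rfl⟩ := e.surjective k
    rw [Function.comp_apply, Function.comp_apply, MeasurableEquiv.coe_piCongrLeft,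
      Equiv.piCongrLeft_apply_apply, e.symm_apply_apply]
    cases i <;> rfl
  rw [heq]
  exact (volume_measurePreserving_piCongrLeft (fun _ => α) e).comp
    (volume_measurePreserving_sumPiEquivProdPi_symm fun _ => α)

lemma volume_eq_smul_map_mulVec {E : Type*} [MeasureSpace E] [DecidableEq ι] {M : Matrix ι ι ℝ}
    (hM : M.det ≠ 0) {f : E → ι → ℝ} (hf : MeasurePreserving f) :
    (volume : Measure (ι → ℝ)) =
      ENNReal.ofReal |M.det| • Measure.map (fun x => M *ᵥ f x) volume := by
  have hmap : Measure.map (fun x => M *ᵥ f x) volume = ENNReal.ofReal |M.det⁻¹| • volume := by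
    rw [← Real.map_matrix_volume_pi_eq_smul_volume_pi hM, ← hf.map_eq,
      Measure.map_map (LinearMap.continuous_of_finiteDimensional _).measurable hf.measurable]
    rfl
  rw [hmap, smul_smul, ← ENNReal.ofReal_mul (abs_nonneg _), ← abs_mul, mul_inv_cancel₀ hM, abs_one,
    ENNReal.ofReal_one, one_smul]

end MeasurePreserving

lemma setLIntegral_Ioc_ofReal {f : ℝ → ℝ} {a b : ℝ} (hab : a ≤ b)
    (hf : ContinuousOn f (Set.Icc a b)) (hf₀ : ∀ x ∈ Set.Ioc a b, 0 ≤ f x) :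
    ∫⁻ x in Set.Ioc a b, ENNReal.ofReal (f x) = ENNReal.ofReal (∫ x in a..b, f x) := by
  rw [intervalIntegral.integral_of_le hab, ofReal_integral_eq_lintegral_ofReal
    (hf.integrableOn_Icc.mono_set Set.Ioc_subset_Icc_self)
    ((ae_restrict_iff' measurableSet_Ioc).2 (.of_forall hf₀))]

lemma lintegral_fun_norm_addHaar {E : Type*} [NormedAddCommGroup E] [NormedSpace ℝ E]
    [FiniteDimensional ℝ E] [Nontrivial E] [MeasurableSpace E] [BorelSpace E] (μ : Measure E)
    [μ.IsAddHaarMeasure] {g : ℝ → ℝ≥0∞} (hg : Measurable g) :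
    ∫⁻ x, g ‖x‖ ∂μ = Module.finrank ℝ E * μ (Metric.ball 0 1) *
      ∫⁻ r in Set.Ioi (0 : ℝ), ENNReal.ofReal (r ^ (Module.finrank ℝ E - 1)) * g r :=
  calc
    ∫⁻ x, g ‖x‖ ∂μ = ∫⁻ x : ({0}ᶜ : Set E), g ‖x.1‖ ∂(μ.comap (↑)) := by
      rw [lintegral_subtype_comap (measurableSet_singleton _).compl fun x => g ‖x‖,
        restrict_compl_singleton]
    _ = ∫⁻ p, g p.2 ∂μ.toSphere.prod (.volumeIoiPow (Module.finrank ℝ E - 1)) := by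
      rw [← μ.measurePreserving_homeomorphUnitSphereProd.lintegral_comp (by fun_prop)]
      simp only [homeomorphUnitSphereProd_apply_snd_coe]
    _ = μ.toSphere Set.univ *
        ∫⁻ r : Set.Ioi (0 : ℝ), g r ∂.volumeIoiPow (Module.finrank ℝ E - 1) := by
      rw [lintegral_prod _ (by fun_prop)]
      simp only [lintegral_const, mul_comm]
    _ = _ := by
      rw [μ.toSphere_apply_univ, Measure.volumeIoiPow,
        lintegral_withDensity_eq_lintegral_mul _ (by fun_prop) (by fun_prop)]
      congr 1
      exact lintegral_subtype_comap measurableSet_Ioi fun r : ℝ =>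
        ENNReal.ofReal (r ^ (Module.finrank ℝ E - 1)) * g r

section PosSemidefCompletions

open Matrix

variable {m n : Type*}

lemma isClosed_setOf_matrix_posSemidef {R : Type*} [Ring R] [PartialOrder R] [StarRing R]
    [TopologicalSpace R] [IsTopologicalSemiring R] [ContinuousStar R] [OrderClosedTopology R] :
    IsClosed {M : Matrix n n R | M.PosSemidef} := by
  simp only [PosSemidef, Set.ofPred_and, Set.ofPred_forall, Finsupp.sum]
  refine (isClosed_eq (by fun_prop) continuous_id).inter (isClosed_iInter fun x => ?_)
  exact isClosed_le continuous_const (by fun_prop)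

/-- The matrices `B`, given as families of entries, for which the block matrix `[A, B; Bᵀ, D]` is
positive semidefinite. -/
def posSemidefCompletions (A : Matrix m m ℝ) (D : Matrix n n ℝ) : Set (m × n → ℝ) :=
  {w | (fromBlocks A (of w.curry) (of w.curry)ᵀ D).PosSemidef}

lemma posSemidef_of_mem_posSemidefCompletions {A : Matrix m m ℝ} {D : Matrix n n ℝ}
    {w : m × n → ℝ} (hw : w ∈ posSemidefCompletions A D) : A.PosSemidef ∧ D.PosSemidef :=
  ⟨hw.submatrix Sum.inl, hw.submatrix Sum.inr⟩

lemma isClosed_posSemidefCompletions (A : Matrix m m ℝ) (D : Matrix n n ℝ) :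
    IsClosed (posSemidefCompletions A D) := by
  have hcurry : Continuous fun w : m × n → ℝ => of w.curry :=
    continuous_matrix fun i j => continuous_apply (i, j)
  exact isClosed_setOf_matrix_posSemidef.preimage
    (continuous_const.matrix_fromBlocks hcurry hcurry.matrix_transpose continuous_const)

/-- The matrices, given as families of entries, that are contractions for the Euclidean norms. -/
def contractions (m n : Type*) [Fintype m] [DecidableEq n] : Set (m × n → ℝ) :=
  {w | (1 - (of w.curry)ᵀ * of w.curry).PosSemidef}

lemma posSemidefCompletions_one_one [Fintype m] [Finite n] [DecidableEq m] [DecidableEq n] :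
    posSemidefCompletions (1 : Matrix m m ℝ) (1 : Matrix n n ℝ) = contractions m n := by
  cases nonempty_fintype n
  ext w
  let : Invertible (1 : Matrix m m ℝ) := invertibleOne
  have hschur := PosDef.one.fromBlocks₁₁ (A := (1 : Matrix m m ℝ)) (of w.curry) 1
  rwa [inv_one, Matrix.mul_one, conjTranspose_eq_transpose_of_trivial] at hschur

variable [Fintype m] [Fintype n]

lemma of_curry_kronecker_mulVec (K : Matrix m m ℝ) (L : Matrix n n ℝ) (w : m × n → ℝ) :
    of ((K ⊗ₖ L) *ᵥ w).curry = K * of w.curry * Lᵀ := by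
  have hvec : (K ⊗ₖ L) *ᵥ w = vec (L * (of w.curry)ᵀ * Kᵀ) :=
    kronecker_mulVec_vec L (of w.curry)ᵀ K
  have htr : K * of w.curry * Lᵀ = (L * (of w.curry)ᵀ * Kᵀ)ᵀ := by
    simp only [transpose_mul, transpose_transpose, Matrix.mul_assoc]
  rw [hvec, htr]
  rfl

variable [DecidableEq m] [DecidableEq n]

lemma kronecker_mulVec_mem_posSemidefCompletions {K : Matrix m m ℝ} {L : Matrix n n ℝ}
    (hK : IsUnit K) (hL : IsUnit L) (A : Matrix m m ℝ) (D : Matrix n n ℝ) (w : m × n → ℝ) :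
    (K ⊗ₖ L) *ᵥ w ∈ posSemidefCompletions (K * A * Kᵀ) (L * D * Lᵀ) ↔
      w ∈ posSemidefCompletions A D := by
  have hunit : IsUnit (fromBlocks K 0 0 L) := by
    rw [isUnit_fromBlocks_zero₁₂]
    exact ⟨hK, hL⟩
  have hblocks : fromBlocks (K * A * Kᵀ) (K * of w.curry * Lᵀ) (K * of w.curry * Lᵀ)ᵀ (L * D * Lᵀ) =
      fromBlocks K 0 0 L * fromBlocks A (of w.curry) (of w.curry)ᵀ D *
        star (fromBlocks K 0 0 L) := by
    simp [star_eq_conjTranspose, fromBlocks_transpose, fromBlocks_multiply, Matrix.mul_assoc]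
  simp only [posSemidefCompletions, Set.mem_ofPred_eq, of_curry_kronecker_mulVec, hblocks,
    IsUnit.posSemidef_star_right_conjugate_iff hunit]

open scoped MatrixOrder in
lemma exists_mul_transpose_eq_of_posDef {A : Matrix n n ℝ} (hA : A.PosDef) :
    ∃ K : Matrix n n ℝ, IsUnit K ∧ K.det = √A.det ∧ K * Kᵀ = A := by
  have hnonneg : 0 ≤ A := hA.posSemidef.nonneg
  have hdet : (CFC.sqrt A).det = √A.det :=
    hA.posSemidef.det_sqrt.trans RCLike.sqrt_real
  have hsymm : (CFC.sqrt A)ᵀ = CFC.sqrt A := (CFC.sqrt_nonneg A).posSemidef.isHermitian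
  refine ⟨CFC.sqrt A, ?_, hdet, ?_⟩
  · rw [isUnit_iff_isUnit_det, hdet, isUnit_iff_ne_zero]
    exact (Real.sqrt_pos.2 hA.det_pos).ne'
  · rw [hsymm, CFC.sqrt_mul_sqrt_self A]

lemma volume_posSemidefCompletions {A : Matrix m m ℝ} {D : Matrix n n ℝ} (hA : A.PosDef)
    (hD : D.PosDef) : volume (posSemidefCompletions A D) =
      ENNReal.ofReal (√A.det ^ Fintype.card n * √D.det ^ Fintype.card m) *
        volume (contractions m n) := by
  obtain ⟨K, hK, hKdet, rfl⟩ := exists_mul_transpose_eq_of_posDef hA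
  obtain ⟨L, hL, hLdet, rfl⟩ := exists_mul_transpose_eq_of_posDef hD
  have hdet : (K ⊗ₖ L).det ≠ 0 := by
    rw [← isUnit_iff_ne_zero, ← isUnit_iff_isUnit_det]
    exact hK.kronecker hL
  have hpre : (fun w => (K ⊗ₖ L) *ᵥ w) ⁻¹' posSemidefCompletions (K * Kᵀ) (L * Lᵀ) =
      contractions m n := by
    ext w
    rw [← posSemidefCompletions_one_one, ← kronecker_mulVec_mem_posSemidefCompletions hK hL,
      Matrix.mul_one, Matrix.mul_one, Set.mem_preimage]
  calc volume (posSemidefCompletions (K * Kᵀ) (L * Lᵀ))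
    _ = (ENNReal.ofReal |(K ⊗ₖ L).det| • Measure.map (fun w => (K ⊗ₖ L) *ᵥ w) volume)
          (posSemidefCompletions (K * Kᵀ) (L * Lᵀ)) :=
      DFunLike.congr_fun (volume_eq_smul_map_mulVec hdet (.id _)) _
    _ = _ := by
      rw [Measure.smul_apply, Measure.map_apply (by fun_prop)
        (isClosed_posSemidefCompletions _ _).measurableSet, hpre, smul_eq_mul, det_kronecker, hKdet,
        hLdet, abs_of_nonneg (by positivity)]

end PosSemidefCompletions

section Bloch

open Matrix ComplexConjugate

/-- The real symmetric `2 × 2` matrix with trace `2 * t` and eigenvalues `t ± ‖z‖`: the Bloch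
parametrisation. -/
def blochMatrix (t : ℝ) (z : ℂ) : Matrix (Fin 2) (Fin 2) ℝ :=
  !![t + z.re, z.im; z.im, t - z.re]

lemma det_blochMatrix (t : ℝ) (z : ℂ) : (blochMatrix t z).det = t ^ 2 - ‖z‖ ^ 2 := by
  rw [blochMatrix, det_fin_two_of, Complex.sq_norm, Complex.normSq_apply]
  ring

lemma one_sub_blochMatrix (t : ℝ) (z : ℂ) : 1 - blochMatrix t z = blochMatrix (1 - t) (-z) := by
  ext i j
  fin_cases i <;> fin_cases j <;> simp [blochMatrix] <;> ring

lemma posSemidef_blochMatrix_iff {t : ℝ} {z : ℂ} : (blochMatrix t z).PosSemidef ↔ ‖z‖ ≤ t := by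
  constructor
  · intro h
    have htrace : 0 ≤ t := by
      have htr := h.trace_nonneg
      rw [blochMatrix, trace_fin_two_of] at htr
      linarith
    have hdet := h.det_nonneg
    rw [det_blochMatrix] at hdet
    exact (abs_le_of_sq_le_sq' (sub_nonneg.1 hdet) htrace).2
  · intro h
    refine .of_dotProduct_mulVec_nonneg ?_ fun x => ?_
    · ext i j
      fin_cases i <;> fin_cases j <;> rfl
    · have hquad : star x ⬝ᵥ blochMatrix t z *ᵥ x =
          t * ‖(⟨x 0, x 1⟩ : ℂ)‖ ^ 2 + (conj z * (⟨x 0, x 1⟩ : ℂ) ^ 2).re := by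
        rw [Complex.sq_norm, Complex.normSq_apply]
        simp [blochMatrix, mulVec, dotProduct, Fin.sum_univ_two, sq]
        ring
      have hre : -(‖z‖ * ‖(⟨x 0, x 1⟩ : ℂ)‖ ^ 2) ≤ (conj z * (⟨x 0, x 1⟩ : ℂ) ^ 2).re := by
        have habs := (abs_le.1 (Complex.abs_re_le_norm (conj z * (⟨x 0, x 1⟩ : ℂ) ^ 2))).1
        rwa [norm_mul, norm_pow, Complex.norm_conj] at habs
      rw [hquad]
      linarith [mul_le_mul_of_nonneg_right h (sq_nonneg ‖(⟨x 0, x 1⟩ : ℂ)‖)]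

lemma posDef_blochMatrix {t : ℝ} {z : ℂ} (h : ‖z‖ < t) : (blochMatrix t z).PosDef := by
  rw [(posSemidef_blochMatrix_iff.2 h.le).posDef_iff_det_ne_zero, det_blochMatrix]
  exact (sub_pos.2 (pow_lt_pow_left₀ h (norm_nonneg z) two_ne_zero)).ne'

/-- The matrix that takes `(t, z.re, z.im)` to the entries of `blochMatrix t z` on and above the
diagonal. -/
def blochCoordinates : Matrix (Fin 3) (Fin 3) ℝ :=
  !![1, 1, 0; 0, 0, 1; 1, -1, 0]

lemma det_blochCoordinates : blochCoordinates.det = 2 := by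
  simp [blochCoordinates, det_fin_three]
  norm_num

lemma blochCoordinates_mulVec (t : ℝ) (z : ℂ) :
    blochCoordinates *ᵥ ![t, z.re, z.im] = ![t + z.re, z.im, t - z.re] := by
  ext i
  fin_cases i <;> simp [blochCoordinates, mulVec, dotProduct, Fin.sum_univ_three, sub_eq_add_neg]

lemma measurePreserving_vecCons_re_im :
    MeasurePreserving fun p : ℝ × ℂ => ![p.1, p.2.re, p.2.im] := by
  have heq : (fun p : ℝ × ℂ => ![p.1, p.2.re, p.2.im]) =
      (MeasurableEquiv.piFinSuccAbove (fun _ : Fin 3 => ℝ) 0).symm ∘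
        Prod.map id Complex.measurableEquivPi := by
    ext p i
    fin_cases i <;> rfl
  rw [heq]
  exact (volume_preserving_piFinSuccAbove (fun _ => ℝ) 0).symm.comp
    ((MeasurePreserving.id volume).prod Complex.volume_preserving_equiv_pi)

lemma lintegral_symm_eq_lintegral_blochMatrix {F : Matrix (Fin 2) (Fin 2) ℝ → ℝ≥0∞}
    (hF : Measurable fun u : Fin 3 → ℝ => F !![u 0, u 1; u 1, u 2]) :
    ∫⁻ u : Fin 3 → ℝ, F !![u 0, u 1; u 1, u 2] = 2 * ∫⁻ z : ℂ, ∫⁻ t : ℝ, F (blochMatrix t z) := by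
  have hdet : blochCoordinates.det ≠ 0 := by
    rw [det_blochCoordinates]
    exact two_ne_zero
  have hbloch (t : ℝ) (z : ℂ) : !![(blochCoordinates *ᵥ ![t, z.re, z.im]) 0,
      (blochCoordinates *ᵥ ![t, z.re, z.im]) 1; (blochCoordinates *ᵥ ![t, z.re, z.im]) 1,
      (blochCoordinates *ᵥ ![t, z.re, z.im]) 2] = blochMatrix t z := by
    rw [blochCoordinates_mulVec]
    rfl
  have hmeas : Measurable fun p : ℝ × ℂ => blochCoordinates *ᵥ ![p.1, p.2.re, p.2.im] :=
    (by fun_prop : Measurable fun y => blochCoordinates *ᵥ y).comp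
      measurePreserving_vecCons_re_im.measurable
  have hF' := hF.comp hmeas
  simp only [Function.comp_def, hbloch] at hF'
  rw [volume_eq_smul_map_mulVec hdet measurePreserving_vecCons_re_im, lintegral_smul_measure,
    lintegral_map hF hmeas, det_blochCoordinates, abs_two, ENNReal.ofReal_ofNat, smul_eq_mul]
  simp only [hbloch]
  rw [Measure.volume_eq_prod, lintegral_prod_symm _ hF'.aemeasurable]

end Bloch

section Contractions

open Matrix ComplexConjugate

/-- The matrix, in the basis `1, I` of `ℂ`, of the real-linear map `x ↦ z * x + w * conj x`. Every
real `2 × 2` matrix is of this form, and its operator norm is `‖z‖ + ‖w‖`. -/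
def planeMap (z w : ℂ) : Matrix (Fin 2) (Fin 2) ℝ :=
  !![z.re + w.re, -z.im + w.im; z.im + w.im, z.re - w.re]

lemma one_sub_transpose_planeMap_mul_planeMap (z w : ℂ) : 1 - (planeMap z w)ᵀ * planeMap z w =
    blochMatrix (1 - (‖z‖ ^ 2 + ‖w‖ ^ 2)) (-2 * (conj z * w)) := by
  simp only [Complex.sq_norm, Complex.normSq_apply]
  ext i j
  fin_cases i <;> fin_cases j <;>
    simp [planeMap, blochMatrix, Matrix.mul_apply, Fin.sum_univ_two] <;> ring

lemma uncurry_planeMap_mem_contractions_iff {z w : ℂ} :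
    Function.uncurry (planeMap z w) ∈ contractions (Fin 2) (Fin 2) ↔ ‖z‖ + ‖w‖ ≤ 1 := by
  have hnorm : ‖-2 * (conj z * w)‖ = 2 * (‖z‖ * ‖w‖) := by
    simp only [norm_mul, norm_neg, Complex.norm_conj, Complex.norm_ofNat]
  change (1 - (planeMap z w)ᵀ * planeMap z w).PosSemidef ↔ _
  rw [one_sub_transpose_planeMap_mul_planeMap, posSemidef_blochMatrix_iff, hnorm,
    ← sq_le_one_iff₀ (by positivity)]
  constructor <;> intro h <;> linarith

lemma volume_norm_add_norm_le_one :
    volume {x : Fin 2 → ℂ | ‖x 0‖ + ‖x 1‖ ≤ 1} = ENNReal.ofReal (π ^ 2 / 6) := by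
  have hball := Complex.volume_sum_rpow_le (Fin 2) (p := 1) le_rfl 1
  have hGamma₃ : Gamma (2 / 1 + 1) = 2 := by
    rw [div_one]
    exact Gamma_nat_eq_factorial 2
  have hGamma₅ : Gamma (2 * (2 : ℕ) / 1 + 1) = 24 := by
    convert Gamma_nat_eq_factorial 4 using 2 <;> norm_num [Nat.factorial]
  simp only [Fin.sum_univ_two, rpow_one, div_one, Fintype.card_fin, ENNReal.ofReal_one, one_pow,
    one_mul] at hball hGamma₃ hGamma₅
  rw [hball, hGamma₃, hGamma₅]
  congr 1
  ring

/-- The matrix that takes the real and imaginary parts of `z` and `w` to the entries of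
`planeMap z w`. -/
def planeMapCoordinates : Matrix (Fin 2 × Fin 2) (Fin 2 × Fin 2) ℝ :=
  submatrix !![1, 0, 1, 0; 0, -1, 0, 1; 0, 1, 0, 1; 1, 0, -1, 0] finProdFinEquiv finProdFinEquiv

lemma det_planeMapCoordinates : planeMapCoordinates.det = -4 := by
  rw [planeMapCoordinates, det_submatrix_equiv_self]
  simp [det_succ_row_zero, Fin.sum_univ_succ, Fin.succAbove]
  norm_num

lemma planeMapCoordinates_mulVec (x : Fin 2 → ℂ) :
    planeMapCoordinates *ᵥ (Function.uncurry fun i => ![(x i).re, (x i).im]) =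
      Function.uncurry (planeMap (x 0) (x 1)) := by
  ext ⟨i, j⟩
  change _ = planeMap (x 0) (x 1) i j
  fin_cases i <;> fin_cases j <;>
    simp [planeMapCoordinates, planeMap, mulVec, dotProduct, Fintype.sum_prod_type,
      finProdFinEquiv, sub_eq_add_neg]

lemma volume_contractions_fin_two :
    volume (contractions (Fin 2) (Fin 2)) =
      ENNReal.ofReal (2 * π ^ 2 / 3) := by
  have hdet : planeMapCoordinates.det ≠ 0 := by
    rw [det_planeMapCoordinates]
    norm_num
  have hcoord : MeasurePreserving fun x : Fin 2 → ℂ =>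
      Function.uncurry fun i => ![(x i).re, (x i).im] :=
    measurePreserving_uncurry.comp
      (volume_preserving_pi fun _ : Fin 2 => Complex.volume_preserving_equiv_pi)
  have hmeas : Measurable fun x : Fin 2 → ℂ =>
      planeMapCoordinates *ᵥ Function.uncurry fun i => ![(x i).re, (x i).im] :=
    (by fun_prop : Measurable fun y => planeMapCoordinates *ᵥ y).comp hcoord.measurable
  have hcontr : IsClosed (contractions (Fin 2) (Fin 2)) := by
    rw [← posSemidefCompletions_one_one]
    exact isClosed_posSemidefCompletions 1 1
  have hpre : (fun x : Fin 2 → ℂ =>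
        planeMapCoordinates *ᵥ Function.uncurry fun i => ![(x i).re, (x i).im]) ⁻¹'
      contractions (Fin 2) (Fin 2) = {x | ‖x 0‖ + ‖x 1‖ ≤ 1} := by
    ext x
    rw [Set.mem_preimage, planeMapCoordinates_mulVec,
      uncurry_planeMap_mem_contractions_iff, Set.mem_ofPred_eq]
  rw [volume_eq_smul_map_mulVec hdet hcoord, Measure.smul_apply,
    Measure.map_apply hmeas hcontr.measurableSet, hpre,
    volume_norm_add_norm_le_one, det_planeMapCoordinates, smul_eq_mul,
    ← ENNReal.ofReal_mul (abs_nonneg _), abs_neg, abs_of_pos four_pos]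
  congr 1
  ring

end Contractions

section BlochDensity

lemma volume_posSemidefCompletions_blochMatrix {t : ℝ} {z : ℂ} (h₁ : t ≠ ‖z‖) (h₂ : t ≠ 1 - ‖z‖) :
    volume (posSemidefCompletions (blochMatrix t z) (1 - blochMatrix t z)) =
      (Set.Ioc ‖z‖ (1 - ‖z‖)).indicator
        (fun t => ENNReal.ofReal ((t ^ 2 - ‖z‖ ^ 2) * ((1 - t) ^ 2 - ‖z‖ ^ 2))) t *
      volume (contractions (Fin 2) (Fin 2)) := by
  rw [one_sub_blochMatrix]
  by_cases ht : t ∈ Set.Ioc ‖z‖ (1 - ‖z‖)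
  · have hA : (blochMatrix t z).PosDef := posDef_blochMatrix ht.1
    have hD : (blochMatrix (1 - t) (-z)).PosDef := by
      refine posDef_blochMatrix ?_
      rw [norm_neg]
      linarith [lt_of_le_of_ne ht.2 h₂]
    rw [Set.indicator_of_mem ht, volume_posSemidefCompletions hA hD, Fintype.card_fin,
      sq_sqrt hA.det_pos.le, sq_sqrt hD.det_pos.le, det_blochMatrix, det_blochMatrix, norm_neg]
  · have hempty : posSemidefCompletions (blochMatrix t z) (blochMatrix (1 - t) (-z)) = ∅ := by
      refine Set.eq_empty_of_forall_notMem fun w hw => ht ?_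
      obtain ⟨hA, hD⟩ := posSemidef_of_mem_posSemidefCompletions hw
      rw [posSemidef_blochMatrix_iff] at hA hD
      rw [norm_neg] at hD
      exact ⟨lt_of_le_of_ne hA h₁.symm, by linarith⟩
    rw [Set.indicator_of_notMem ht, zero_mul, hempty, measure_empty]

/-- The integral of `det A * det (1 - A)` over the matrices `A = blochMatrix t z` with `‖z‖ = r`
for which `A` and `1 - A` are positive semidefinite. It is only meaningful for `r ≤ 1 / 2`; for
larger `r` there is no such `A`, and the value is nonpositive. -/
noncomputable def blochDensity (r : ℝ) : ℝ :=
  (1 - 2 * r) ^ 3 * (1 + 6 * r + 4 * r ^ 2) / 30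

@[fun_prop]
lemma continuous_blochDensity : Continuous blochDensity := by
  unfold blochDensity
  fun_prop

lemma blochDensity_nonneg {r : ℝ} (hr₀ : 0 ≤ r) (hr : r ≤ 1 / 2) : 0 ≤ blochDensity r := by
  have hcube : 0 ≤ (1 - 2 * r) ^ 3 := pow_nonneg (by linarith) 3
  unfold blochDensity
  positivity

lemma blochDensity_nonpos {r : ℝ} (hr : 1 / 2 ≤ r) : blochDensity r ≤ 0 := by
  have hcube : (1 - 2 * r) ^ 3 ≤ 0 := Odd.pow_nonpos (by decide) (by linarith)
  exact div_nonpos_of_nonpos_of_nonneg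
    (mul_nonpos_of_nonpos_of_nonneg hcube (by nlinarith [sq_nonneg r])) (by norm_num)

lemma integral_eq_blochDensity (r : ℝ) :
    ∫ t in r..1 - r, (t ^ 2 - r ^ 2) * ((1 - t) ^ 2 - r ^ 2) = blochDensity r := by
  have hderiv (t : ℝ) : HasDerivAt (fun t => t ^ 5 / 5 - t ^ 4 / 2 + (1 - 2 * r ^ 2) * (t ^ 3 / 3) +
      r ^ 2 * t ^ 2 - r ^ 2 * (1 - r ^ 2) * t) ((t ^ 2 - r ^ 2) * ((1 - t) ^ 2 - r ^ 2)) t :=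
    ((((((hasDerivAt_pow 5 t).div_const 5).sub ((hasDerivAt_pow 4 t).div_const 2)).add
      (((hasDerivAt_pow 3 t).div_const 3).const_mul _)).add ((hasDerivAt_pow 2 t).const_mul _)).sub
      ((hasDerivAt_id t).const_mul _)).congr_deriv (by push_cast; ring)
  rw [intervalIntegral.integral_eq_sub_of_hasDerivAt (fun t _ => hderiv t)
    (Continuous.intervalIntegrable (by fun_prop) _ _), blochDensity]
  ring

lemma integral_mul_blochDensity :
    ∫ r in (0 : ℝ)..1 / 2, r * blochDensity r = 1 / 1120 := by
  have hderiv (r : ℝ) : HasDerivAt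
      (fun r => (r ^ 2 / 2 - 5 * r ^ 4 + 8 * r ^ 5 - 32 * (r ^ 7 / 7)) / 30)
      (r * blochDensity r) r :=
    ((((((hasDerivAt_pow 2 r).div_const 2).sub ((hasDerivAt_pow 4 r).const_mul 5)).add
      ((hasDerivAt_pow 5 r).const_mul 8)).sub
      (((hasDerivAt_pow 7 r).div_const 7).const_mul 32)).div_const 30).congr_deriv
      (by rw [blochDensity]; push_cast; ring)
  rw [intervalIntegral.integral_eq_sub_of_hasDerivAt (fun r _ => hderiv r)
    ((continuous_id.mul continuous_blochDensity).intervalIntegrable _ _)]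
  norm_num

lemma lintegral_volume_posSemidefCompletions_blochMatrix (z : ℂ) :
    ∫⁻ t : ℝ, volume (posSemidefCompletions (blochMatrix t z) (1 - blochMatrix t z)) =
      ENNReal.ofReal (blochDensity ‖z‖) * volume (contractions (Fin 2) (Fin 2)) := by
  have hae : ∀ᵐ t : ℝ, volume (posSemidefCompletions (blochMatrix t z) (1 - blochMatrix t z)) =
      (Set.Ioc ‖z‖ (1 - ‖z‖)).indicator
        (fun t => ENNReal.ofReal ((t ^ 2 - ‖z‖ ^ 2) * ((1 - t) ^ 2 - ‖z‖ ^ 2))) t *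
      volume (contractions (Fin 2) (Fin 2)) := by
    filter_upwards [volume.ae_ne ‖z‖, volume.ae_ne (1 - ‖z‖)] with t h₁ h₂
    exact volume_posSemidefCompletions_blochMatrix h₁ h₂
  rw [lintegral_congr_ae hae, lintegral_mul_const _
    (Measurable.indicator (by fun_prop) measurableSet_Ioc), lintegral_indicator measurableSet_Ioc]
  rcases le_total ‖z‖ (1 - ‖z‖) with hz | hz
  · rw [setLIntegral_Ioc_ofReal hz (by fun_prop), integral_eq_blochDensity]
    rintro t ⟨ht₁, ht₂⟩
    have hnorm := norm_nonneg z
    exact mul_nonneg (by nlinarith) (by nlinarith)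
  · rw [Set.Ioc_eq_empty hz.not_gt, Measure.restrict_empty, lintegral_zero_measure,
      ENNReal.ofReal_of_nonpos (blochDensity_nonpos (by linarith)), zero_mul]

lemma setLIntegral_Ioi_mul_blochDensity :
    ∫⁻ r in Set.Ioi (0 : ℝ), ENNReal.ofReal r * ENNReal.ofReal (blochDensity r) =
      ENNReal.ofReal (1 / 1120) := by
  have hhalf : (0 : ℝ) ≤ 1 / 2 := by norm_num
  have htail : ∀ r ∈ Set.Ioi (1 / 2 : ℝ),
      ENNReal.ofReal r * ENNReal.ofReal (blochDensity r) = 0 := fun r hr => by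
    rw [ENNReal.ofReal_of_nonpos (blochDensity_nonpos (le_of_lt hr)), mul_zero]
  have hhead : ∀ r ∈ Set.Ioc (0 : ℝ) (1 / 2),
      ENNReal.ofReal r * ENNReal.ofReal (blochDensity r) = ENNReal.ofReal (r * blochDensity r) :=
    fun r hr => (ENNReal.ofReal_mul hr.1.le).symm
  rw [← Set.Ioc_union_Ioi_eq_Ioi hhalf,
    lintegral_union measurableSet_Ioi (Set.Ioc_disjoint_Ioi le_rfl),
    setLIntegral_congr_fun measurableSet_Ioc hhead,
    setLIntegral_congr_fun measurableSet_Ioi htail, lintegral_zero, add_zero,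
    setLIntegral_Ioc_ofReal hhalf (by fun_prop)
      fun r hr => mul_nonneg hr.1.le (blochDensity_nonneg hr.1.le hr.2),
    integral_mul_blochDensity]

lemma lintegral_blochDensity_norm :
    ∫⁻ z : ℂ, ENNReal.ofReal (blochDensity ‖z‖) = ENNReal.ofReal (π / 560) := by
  have hmeas : Measurable fun r => ENNReal.ofReal (blochDensity r) :=
    continuous_blochDensity.measurable.ennreal_ofReal
  rw [lintegral_fun_norm_addHaar volume hmeas, Complex.finrank_real_complex, Complex.volume_ball]
  simp only [Nat.add_one_sub_one, pow_one, setLIntegral_Ioi_mul_blochDensity]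
  rw [ENNReal.ofReal_one, one_pow, one_mul, ← NNReal.coe_real_pi, ← ENNReal.ofReal_coe_nnreal,
    ← ENNReal.ofReal_natCast, ← ENNReal.ofReal_mul (by positivity),
    ← ENNReal.ofReal_mul (by positivity)]
  congr 1
  push_cast
  ring

end BlochDensity

section Choi

open Matrix

/-- Splits the parameters `(a, b, c, d, e, f, g)` of a Choi matrix into `(a, c, f)` and the matrix
`[b, d; e, g]`. -/
def choiParamEquiv : Fin 3 ⊕ Fin 2 × Fin 2 ≃ Fin 7 where
  toFun := Sum.elim ![0, 2, 5] (Function.uncurry ![![1, 3], ![4, 6]])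
  invFun := ![.inl 0, .inr (0, 0), .inl 1, .inr (0, 1), .inr (1, 0), .inl 2, .inr (1, 1)]
  left_inv := by decide
  right_inv := by decide

/-- The reordering of the rows and columns of a Choi matrix that gives it complementary diagonal
blocks `A` and `1 - A`. -/
def choiBlockEquiv : Fin 2 ⊕ Fin 2 ≃ Fin 4 where
  toFun := Sum.elim ![0, 2] ![1, 3]
  invFun := ![.inl 0, .inr 0, .inl 1, .inr 1]
  left_inv := by decide
  right_inv := by decide

lemma choiR_submatrix_choiBlockEquiv (u : Fin 3 → ℝ) (w : Fin 2 × Fin 2 → ℝ) :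
    (choiR (Sum.elim u w ∘ choiParamEquiv.symm)).submatrix choiBlockEquiv choiBlockEquiv =
      fromBlocks !![u 0, u 1; u 1, u 2] (of w.curry) (of w.curry)ᵀ
        (1 - !![u 0, u 1; u 1, u 2]) := by
  ext (i | i) (j | j) <;> fin_cases i <;> fin_cases j <;>
    simp [choiR, choiBlockEquiv, choiParamEquiv]

lemma posSemidef_choiR_iff (u : Fin 3 → ℝ) (w : Fin 2 × Fin 2 → ℝ) :
    (choiR (Sum.elim u w ∘ choiParamEquiv.symm)).PosSemidef ↔
      w ∈ posSemidefCompletions !![u 0, u 1; u 1, u 2] (1 - !![u 0, u 1; u 1, u 2]) := by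
  rw [← posSemidef_submatrix_equiv choiBlockEquiv, choiR_submatrix_choiBlockEquiv]
  rfl

lemma continuous_choiR : Continuous choiR := by
  unfold choiR
  fun_prop

lemma volume_setOf_posSemidef_choiR_eq_lintegral :
    volume {v | (choiR v).PosSemidef} = 2 * ∫⁻ z : ℂ, ∫⁻ t : ℝ,
      volume (posSemidefCompletions (blochMatrix t z) (1 - blochMatrix t z)) := by
  have hparam := measurePreserving_sumElim_comp_symm (α := ℝ) choiParamEquiv
  have hset : MeasurableSet {v | (choiR v).PosSemidef} :=
    (isClosed_setOf_matrix_posSemidef.preimage continuous_choiR).measurableSet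
  have hfibre (u : Fin 3 → ℝ) :
      Prod.mk u ⁻¹' ((fun p : (Fin 3 → ℝ) × (Fin 2 × Fin 2 → ℝ) =>
        Sum.elim p.1 p.2 ∘ choiParamEquiv.symm) ⁻¹' {v | (choiR v).PosSemidef}) =
      posSemidefCompletions !![u 0, u 1; u 1, u 2] (1 - !![u 0, u 1; u 1, u 2]) := by
    ext w
    exact posSemidef_choiR_iff u w
  have hmeas := measurable_measure_prodMk_left (ν := volume) (hparam.measurable hset)
  simp only [hfibre] at hmeas
  rw [← hparam.measure_preimage hset.nullMeasurableSet, Measure.volume_eq_prod,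
    Measure.prod_apply (hparam.measurable hset)]
  simp only [hfibre]
  exact lintegral_symm_eq_lintegral_blochMatrix
    (F := fun A => volume (posSemidefCompletions A (1 - A))) hmeas

lemma volume_setOf_posSemidef_choiR :
    volume {v | (choiR v).PosSemidef} = ENNReal.ofReal (π ^ 3 / 420) := by
  simp only [volume_setOf_posSemidef_choiR_eq_lintegral,
    lintegral_volume_posSemidefCompletions_blochMatrix, volume_contractions_fin_two]
  rw [lintegral_mul_const _ (by fun_prop), lintegral_blochDensity_norm,
    ← ENNReal.ofReal_mul (by positivity), ← ENNReal.ofReal_ofNat, ← ENNReal.ofReal_mul zero_le_two]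
  congr 1
  ring

end Choi

/-- The volume of the space of real qubit channels `𝒬_ℝ ⊆ ℝ⁷` (with volume element `2⁴ dλ₇`)
equals `4π³/105`. -/
theorem stmt_12 :
    2 ^ 4 * volume {v : Fin 7 → ℝ | (choiR v).PosSemidef} =
      ENNReal.ofReal (4 * π ^ 3 / 105) := by
  rw [volume_setOf_posSemidef_choiR, ← ENNReal.ofReal_ofNat, ← ENNReal.ofReal_pow zero_le_two,
    ← ENNReal.ofReal_mul (by positivity)]
  congr 1
  ring
end

section
/- For the real qubit channels over a fixed classical channel with parameters a, f ∈ [0,1], the fibre volume is V(a,f) = (128/45)π² · (af)^{3/2}(5(1−a)(1−f) − af) if a + f < 1, and V(a,f) = (128/45)π² · ((1−a)(1−f))^{3/2}(5af − (1−a)(1−f)) if a + f ≥ 1. Equivalently, ∫_{ℝ⁵} 2⁴·𝟙[Q(a,b,c,d,e,f,g) ≥ 0] dλ₅(b,c,d,e,g) equals these expressions. -/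
open MeasureTheory Real

/-- The Choi matrix of a real qubit channel over the classical channel `(a,f)`, with free
parameters `(b,c,d,e,g) ∈ ℝ⁵`. -/
noncomputable def choiRaf (a f : ℝ) (w : Fin 5 → ℝ) : Matrix (Fin 4) (Fin 4) ℝ :=
  !![a, w 0, w 1, w 2;
     w 0, 1 - a, w 3, -(w 1);
     w 1, w 3, f, w 4;
     w 2, -(w 1), w 4, 1 - f]

/-!
Ordering the basis as `0, 2, 1, 3` turns the Choi matrix into a block matrix with diagonal blocks
`A = [[a, c], [c, f]]` and `B = [[1 - a, -c], [-c, 1 - f]]` and a free off-diagonal block `K` made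
of `b, d, e, g`. For fixed `c`, writing `A = SᵀS`, `B = TᵀT` and `K = SᵀXT` reduces positivity to
`‖X‖ ≤ 1` in operator norm, at the cost of a Jacobian `det A * det B`. Identifying `ℝ²` with `ℂ`,
`X` acts as `u ↦ zu + wū`, whose operator norm is `|z| + |w|`; so the unit ball of `2 × 2` matrices
is, up to a conformal change of coordinates, the `ℓ¹` unit ball of `ℂ²`, and has volume `2π²/3`.
It remains to integrate `(2π²/3) (af - c²) ((1 - a)(1 - f) - c²)` over the `c` for which both
factors are positive.
-/

open Matrix
open scoped ComplexConjugate ComplexOrder Kronecker MatrixOrder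

lemma volume_preserving_uncurry (ι κ X : Type*) [Fintype ι] [Fintype κ] [MeasureSpace X]
    [SigmaFinite (volume : Measure X)] :
    MeasurePreserving (MeasurableEquiv.curry ι κ X).symm := by
  refine ⟨(MeasurableEquiv.curry ι κ X).symm.measurable, (Measure.pi_eq fun s _ => ?_).symm⟩
  have hbox : (MeasurableEquiv.curry ι κ X).symm ⁻¹' Set.univ.pi s =
      Set.univ.pi fun i => Set.univ.pi fun j => s (i, j) := by
    ext x
    simp only [Set.mem_preimage, Set.mem_univ_pi, Prod.forall]
    rfl
  rw [MeasurableEquiv.map_apply, hbox]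
  simp_rw [volume_pi_pi]
  rw [Fintype.prod_prod_type]

lemma exists_norm_mul_add_mul_conj_eq (z w : ℂ) :
    ∃ u : ℂ, ‖u‖ = 1 ∧ ‖z * u + w * conj u‖ = ‖z‖ + ‖w‖ := by
  -- This phase of `u` gives `z * u` and `w * conj u` the same argument `φ`.
  set θ : ℝ := (w.arg - z.arg) / 2
  set φ : ℝ := (w.arg + z.arg) / 2
  have hzw : z * Complex.exp (θ * Complex.I) + w * conj (Complex.exp (θ * Complex.I)) =
      ((‖z‖ + ‖w‖ : ℝ) : ℂ) * Complex.exp (φ * Complex.I) := by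
    nth_rw 1 [← Complex.norm_mul_exp_arg_mul_I z, ← Complex.norm_mul_exp_arg_mul_I w]
    rw [← Complex.exp_conj, mul_assoc, mul_assoc, ← Complex.exp_add, ← Complex.exp_add,
      Complex.ofReal_add, add_mul]
    congr 3
    · push_cast [θ, φ]; ring
    · rw [map_mul, Complex.conj_ofReal, Complex.conj_I]; push_cast [θ, φ]; ring
  refine ⟨Complex.exp (θ * Complex.I), Complex.norm_exp_ofReal_mul_I θ, ?_⟩
  rw [hzw, norm_mul, Complex.norm_exp_ofReal_mul_I, mul_one, Complex.norm_real,
    Real.norm_of_nonneg (by positivity)]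

lemma forall_norm_mul_add_mul_conj_le_iff {z w : ℂ} {r : ℝ} :
    (∀ u : ℂ, ‖z * u + w * conj u‖ ≤ r * ‖u‖) ↔ ‖z‖ + ‖w‖ ≤ r := by
  constructor
  · intro h
    obtain ⟨u, hu, hzw⟩ := exists_norm_mul_add_mul_conj_eq z w
    simpa [hu, hzw] using h u
  · intro h u
    calc ‖z * u + w * conj u‖ ≤ ‖z * u‖ + ‖w * conj u‖ := norm_add_le _ _
      _ = (‖z‖ + ‖w‖) * ‖u‖ := by rw [norm_mul, norm_mul, RCLike.norm_conj, add_mul]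
      _ ≤ r * ‖u‖ := by gcongr

lemma isClosed_setOf_posSemidef {n 𝕜 : Type*} [Finite n] [RCLike 𝕜] :
    IsClosed {M : Matrix n n 𝕜 | M.PosSemidef} := by
  cases nonempty_fintype n
  simp only [posSemidef_iff_dotProduct_mulVec, Set.ofPred_and, Set.ofPred_forall]
  refine .inter (isClosed_eq (by fun_prop) continuous_id)
    (isClosed_iInter fun x => isClosed_le continuous_const (by fun_prop))

lemma posDef_fin_two_of_sq_lt {a c f : ℝ} (ha : 0 ≤ a) (h : c ^ 2 < a * f) :
    !![a, c; c, f].PosDef := by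
  have ha' : 0 < a := ha.lt_of_ne (by rintro rfl; nlinarith [sq_nonneg c])
  refine .of_dotProduct_mulVec_pos (by ext i j; fin_cases i <;> fin_cases j <;> rfl) fun x hx => ?_
  have hquad : a * (star x ⬝ᵥ !![a, c; c, f] *ᵥ x) =
      (a * x 0 + c * x 1) ^ 2 + (a * f - c ^ 2) * x 1 ^ 2 := by
    simp only [mulVec, dotProduct, Fin.sum_univ_two, Pi.star_apply, star_trivial, of_apply,
      cons_val', cons_val_fin_one, cons_val_zero, cons_val_one]
    ring
  refine pos_of_mul_pos_right (hquad ▸ ?_) ha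
  by_cases hx1 : x 1 = 0
  · have : x 0 ≠ 0 := fun hx0 => hx (by ext i; fin_cases i <;> assumption)
    rw [hx1, mul_zero, add_zero]
    positivity
  · have := sub_pos.2 h
    positivity

lemma volume_eq_abs_det_mul_volume_preimage {ι : Type*} [Fintype ι] [DecidableEq ι]
    {M : Matrix ι ι ℝ} (hM : M.det ≠ 0) (s : Set (ι → ℝ)) :
    volume s = ENNReal.ofReal |M.det| * volume (toLin' M ⁻¹' s) := by
  rw [Measure.addHaar_preimage_linearMap volume (by rwa [LinearMap.det_toLin']),
    LinearMap.det_toLin', ← mul_assoc, ← ENNReal.ofReal_mul (abs_nonneg _), ← abs_mul,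
    mul_inv_cancel₀ hM, abs_one, ENNReal.ofReal_one, one_mul]

section Completions

variable {m n : Type*}

/-- The off-diagonal blocks, given by their families of entries, which complete the diagonal
blocks `A` and `B` to a positive semidefinite matrix. Families are used instead of matrices because
they carry Lebesgue measure. -/
def psdCompletions (A : Matrix m m ℝ) (B : Matrix n n ℝ) : Set (m × n → ℝ) :=
  {K | (fromBlocks A (of (Function.curry K)) (of (Function.curry K))ᵀ B).PosSemidef}

lemma posSemidef_left_of_mem_psdCompletions {A : Matrix m m ℝ} {B : Matrix n n ℝ} {K : m × n → ℝ}
    (hK : K ∈ psdCompletions A B) : A.PosSemidef :=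
  hK.submatrix Sum.inl

lemma posSemidef_right_of_mem_psdCompletions {A : Matrix m m ℝ} {B : Matrix n n ℝ} {K : m × n → ℝ}
    (hK : K ∈ psdCompletions A B) : B.PosSemidef :=
  hK.submatrix Sum.inr

lemma isClosed_setOf_mem_psdCompletions [Finite m] [Finite n] {X : Type*} [TopologicalSpace X]
    {A : X → Matrix m m ℝ} {B : X → Matrix n n ℝ} {K : X → m × n → ℝ} (hA : Continuous A)
    (hB : Continuous B) (hK : Continuous K) : IsClosed {x | K x ∈ psdCompletions (A x) (B x)} := by
  have hKmat : Continuous fun x => of (Function.curry (K x)) :=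
    continuous_matrix fun i j => (continuous_apply (i, j)).comp hK
  exact isClosed_setOf_posSemidef.preimage (hA.matrix_fromBlocks hKmat hKmat.matrix_transpose hB)

variable [Fintype m] [Fintype n] [DecidableEq m] [DecidableEq n]

lemma mem_psdCompletions_one_iff {K : m × n → ℝ} :
    K ∈ psdCompletions 1 1 ↔
      ∀ v, of (Function.curry K) *ᵥ v ⬝ᵥ of (Function.curry K) *ᵥ v ≤ v ⬝ᵥ v := by
  set X := of (Function.curry K)
  let : Invertible (1 : Matrix m m ℝ) := invertibleOne
  have hschur : K ∈ psdCompletions 1 1 ↔ (1 - Xᴴ * X).PosSemidef := by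
    simpa using! PosDef.fromBlocks₁₁ X 1 PosDef.one
  have hquad (v : n → ℝ) : star v ⬝ᵥ (1 - Xᴴ * X) *ᵥ v = v ⬝ᵥ v - X *ᵥ v ⬝ᵥ X *ᵥ v := by
    rw [sub_mulVec, one_mulVec, dotProduct_sub, ← mulVec_mulVec, dotProduct_mulVec _ Xᴴ,
      vecMul_conjTranspose, star_star]
    rfl
  rw [hschur, posSemidef_iff_dotProduct_mulVec,
    and_iff_right (isHermitian_one.sub (isHermitian_conjTranspose_mul_self X))]
  simp_rw [hquad, sub_nonneg]

lemma preimage_kronecker_psdCompletions {S : Matrix m m ℝ} {T : Matrix n n ℝ} (hS : IsUnit S)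
    (hT : IsUnit T) :
    toLin' (Sᵀ ⊗ₖ Tᵀ) ⁻¹' psdCompletions (Sᵀ * S) (Tᵀ * T) = psdCompletions 1 1 := by
  ext K
  set X := of (Function.curry K)
  have hF : IsUnit (fromBlocks S 0 0 T) := by
    simp only [isUnit_iff_isUnit_det, det_fromBlocks_zero₂₁] at hS hT ⊢
    exact hS.mul hT
  have hK : of (Function.curry (toLin' (Sᵀ ⊗ₖ Tᵀ) K)) = Sᵀ * X * T := by
    rw [← transpose_inj, transpose_mul, transpose_mul, ← Matrix.mul_assoc]
    exact vec_inj.1 (kronecker_mulVec_vec Tᵀ Xᵀ Sᵀ)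
  have hconj : fromBlocks (Sᵀ * S) (Sᵀ * X * T) (Sᵀ * X * T)ᵀ (Tᵀ * T) =
      star (fromBlocks S 0 0 T) * fromBlocks 1 X Xᵀ 1 * fromBlocks S 0 0 T := by
    simp [star_eq_conjTranspose, fromBlocks_transpose, fromBlocks_multiply, Matrix.mul_assoc]
  rw [Set.mem_preimage, psdCompletions, Set.mem_ofPred_eq, hK, hconj,
    hF.posSemidef_star_left_conjugate_iff]
  rfl

lemma volume_psdCompletions {A : Matrix m m ℝ} {B : Matrix n n ℝ} (hA : A.PosDef) (hB : B.PosDef) :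
    volume (psdCompletions A B) =
      ENNReal.ofReal (√A.det ^ Fintype.card n * √B.det ^ Fintype.card m) *
        volume (psdCompletions 1 1 : Set (m × n → ℝ)) := by
  obtain ⟨S, rfl⟩ := CStarAlgebra.nonneg_iff_eq_star_mul_self.mp hA.posSemidef.nonneg
  obtain ⟨T, rfl⟩ := CStarAlgebra.nonneg_iff_eq_star_mul_self.mp hB.posSemidef.nonneg
  simp only [star_eq_conjTranspose, conjTranspose_eq_transpose_of_trivial] at hA hB ⊢
  have hS : IsUnit S := isUnit_of_mul_isUnit_right hA.isUnit
  have hT : IsUnit T := isUnit_of_mul_isUnit_right hB.isUnit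
  have hdet : |(Sᵀ ⊗ₖ Tᵀ).det| =
      √(Sᵀ * S).det ^ Fintype.card n * √(Tᵀ * T).det ^ Fintype.card m := by
    simp [det_kronecker, abs_mul, abs_pow, Real.sqrt_mul_self_eq_abs]
  have hdet_ne : (Sᵀ ⊗ₖ Tᵀ).det ≠ 0 := by
    have := hA.det_pos
    have := hB.det_pos
    rw [← abs_pos, hdet]
    positivity
  rw [volume_eq_abs_det_mul_volume_preimage hdet_ne, preimage_kronecker_psdCompletions hS hT, hdet]

end Completions

lemma volume_preserving_complex_pi (ι : Type*) [Fintype ι] :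
    MeasurePreserving
      (fun (z : ι → ℂ) (p : ι × Fin 2) => Complex.measurableEquivPi (z p.1) p.2) :=
  (volume_preserving_uncurry ι (Fin 2) ℝ).comp
    (volume_preserving_pi fun _ => Complex.volume_preserving_equiv_pi)

/-- The change of coordinates which sends the real and imaginary parts of `z` and `w` to the
entries of the matrix of the real-linear map `u ↦ z * u + w * conj u` of `ℂ`. -/
def conformalMatrix : Matrix (Fin 2 × Fin 2) (Fin 2 × Fin 2) ℝ :=
  !![1, 0, 1, 0;
     0, -1, 0, 1;
     0, 1, 0, 1;
     1, 0, -1, 0].submatrix finProdFinEquiv finProdFinEquiv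

lemma curry_conformalMatrix_mulVec (x : Fin 2 × Fin 2 → ℝ) :
    of (Function.curry (conformalMatrix *ᵥ x)) =
      !![x (0, 0) + x (1, 0), x (1, 1) - x (0, 1);
         x (0, 1) + x (1, 1), x (0, 0) - x (1, 0)] := by
  ext i j
  fin_cases i <;> fin_cases j <;>
    simp [conformalMatrix, mulVec, dotProduct, Fintype.sum_prod_type, finProdFinEquiv] <;> ring

lemma abs_det_conformalMatrix : |conformalMatrix.det| = 4 := by
  rw [conformalMatrix, det_submatrix_equiv_self]
  simp [det_succ_row_zero, Fin.sum_univ_succ, Fin.succAbove]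
  norm_num

lemma conformalMatrix_mulVec_mem_psdCompletions_one_iff (z : Fin 2 → ℂ) :
    (conformalMatrix *ᵥ fun p => Complex.measurableEquivPi (z p.1) p.2) ∈ psdCompletions 1 1 ↔
      ‖z 0‖ + ‖z 1‖ ≤ 1 := by
  rw [mem_psdCompletions_one_iff, curry_conformalMatrix_mulVec,
    ← forall_norm_mul_add_mul_conj_le_iff, ← Complex.measurableEquivPi.toEquiv.forall_congr_right]
  refine forall_congr' fun u => ?_
  set M : Matrix (Fin 2) (Fin 2) ℝ := !![_, _; _, _]
  set v := Complex.measurableEquivPi.toEquiv u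
  have hM : M *ᵥ v ⬝ᵥ M *ᵥ v = ‖z 0 * u + z 1 * conj u‖ ^ 2 := by
    simp [M, v, Complex.sq_norm, Complex.normSq_apply, mulVec, dotProduct,
      Complex.measurableEquivPi]
    ring
  have hv : v ⬝ᵥ v = ‖u‖ ^ 2 := by
    simp [v, Complex.sq_norm, Complex.normSq_apply, dotProduct, Complex.measurableEquivPi]
  rw [hM, hv, one_mul, sq_le_sq₀ (norm_nonneg _) (norm_nonneg _)]

lemma volume_setOf_norm_add_norm_le_one :
    volume {z : Fin 2 → ℂ | ‖z 0‖ + ‖z 1‖ ≤ 1} = ENNReal.ofReal (π ^ 2 / 6) := by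
  have hball := Complex.volume_sum_rpow_le (ι := Fin 2) (p := 1) le_rfl 1
  have hΓ3 : Real.Gamma (2 + 1) = 2 := by
    exact_mod_cast Real.Gamma_nat_eq_factorial 2
  have hΓ5 : Real.Gamma (2 * (2 : ℕ) + 1) = 24 := by
    exact_mod_cast Real.Gamma_nat_eq_factorial 4
  simp only [rpow_one, Fin.sum_univ_two, div_one, ENNReal.ofReal_one, one_pow, one_mul,
    Fintype.card_fin, hΓ3, hΓ5] at hball
  rw [hball]
  congr 1
  ring

lemma volume_psdCompletions_one_fin_two :
    volume (psdCompletions (1 : Matrix (Fin 2) (Fin 2) ℝ) (1 : Matrix (Fin 2) (Fin 2) ℝ)) =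
      ENNReal.ofReal (2 * π ^ 2 / 3) := by
  have hdet : conformalMatrix.det ≠ 0 := by simp [← abs_pos, abs_det_conformalMatrix]
  have hmeas : MeasurableSet (toLin' conformalMatrix ⁻¹' psdCompletions 1 1) :=
    (isClosed_setOf_mem_psdCompletions continuous_const continuous_const
      (LinearMap.continuous_of_finiteDimensional _)).measurableSet
  have hpreimage :
      (fun (z : Fin 2 → ℂ) (p : Fin 2 × Fin 2) => Complex.measurableEquivPi (z p.1) p.2) ⁻¹'
        (toLin' conformalMatrix ⁻¹' psdCompletions 1 1) = {z | ‖z 0‖ + ‖z 1‖ ≤ 1} :=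
    Set.ext conformalMatrix_mulVec_mem_psdCompletions_one_iff
  rw [volume_eq_abs_det_mul_volume_preimage hdet, abs_det_conformalMatrix,
    ← (volume_preserving_complex_pi (Fin 2)).measure_preimage hmeas.nullMeasurableSet, hpreimage,
    volume_setOf_norm_add_norm_le_one, ← ENNReal.ofReal_mul (by norm_num)]
  congr 1
  ring

lemma volume_psdCompletions_fin_two {A B : Matrix (Fin 2) (Fin 2) ℝ} (hA : A.PosDef)
    (hB : B.PosDef) :
    volume (psdCompletions A B) = ENNReal.ofReal (2 * π ^ 2 / 3 * (A.det * B.det)) := by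
  have hA' := hA.det_pos.le
  have hB' := hB.det_pos.le
  rw [volume_psdCompletions hA hB, volume_psdCompletions_one_fin_two, Fintype.card_fin,
    Real.sq_sqrt hA', Real.sq_sqrt hB', ← ENNReal.ofReal_mul (mul_nonneg hA' hB'), mul_comm]

/-- The pairs `(c, K)` such that `K` completes the diagonal blocks `[[a, c], [c, f]]` and
`[[a', -c], [-c, f']]` to a positive semidefinite matrix. -/
def coupledCompletions (a f a' f' : ℝ) : Set (ℝ × (Fin 2 × Fin 2 → ℝ)) :=
  {x | x.2 ∈ psdCompletions !![a, x.1; x.1, f] !![a', -x.1; -x.1, f']}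

lemma measurableSet_coupledCompletions (a f a' f' : ℝ) :
    MeasurableSet (coupledCompletions a f a' f') :=
  (isClosed_setOf_mem_psdCompletions (by fun_prop) (by fun_prop) continuous_snd).measurableSet

lemma volume_mk_preimage_coupledCompletions {a f a' f' c : ℝ} (ha : 0 ≤ a) (ha' : 0 ≤ a')
    (hc : c ^ 2 < a * f) (hc' : c ^ 2 < a' * f') :
    volume (Prod.mk c ⁻¹' coupledCompletions a f a' f') =
      ENNReal.ofReal (2 * π ^ 2 / 3 * ((a * f - c ^ 2) * (a' * f' - c ^ 2))) := by
  have hB : !![a', -c; -c, f'].PosDef := posDef_fin_two_of_sq_lt ha' (by rwa [neg_sq])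
  refine (volume_psdCompletions_fin_two (posDef_fin_two_of_sq_lt ha hc) hB).trans ?_
  simp only [det_fin_two_of]
  congr 1
  ring

lemma sq_le_min_of_mem_coupledCompletions {a f a' f' : ℝ} {x : ℝ × (Fin 2 × Fin 2 → ℝ)}
    (hx : x ∈ coupledCompletions a f a' f') : x.1 ^ 2 ≤ min (a * f) (a' * f') := by
  have hA := (posSemidef_left_of_mem_psdCompletions hx).det_nonneg
  have hB := (posSemidef_right_of_mem_psdCompletions hx).det_nonneg
  rw [det_fin_two_of] at hA hB
  exact le_min (by linarith) (by linarith)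

lemma integral_mul_sub_sq {p : ℝ} (hp : 0 ≤ p) (q : ℝ) :
    ∫ c in -√p..√p, (p - c ^ 2) * (q - c ^ 2) =
      4 / 15 * p ^ ((3 : ℝ) / 2) * (5 * q - p) := by
  have hderiv (c : ℝ) : HasDerivAt (fun c => p * q * c - (p + q) * (c ^ 3 / 3) + c ^ 5 / 5)
      ((p - c ^ 2) * (q - c ^ 2)) c := by
    refine ((((hasDerivAt_id c).const_mul (p * q)).sub
      (((hasDerivAt_pow 3 c).div_const 3).const_mul (p + q))).add
      ((hasDerivAt_pow 5 c).div_const 5)).congr_deriv ?_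
    push_cast
    ring
  have hpow : p ^ ((3 : ℝ) / 2) = √p ^ 3 := by
    rw [Real.sqrt_eq_rpow, ← Real.rpow_natCast, ← Real.rpow_mul hp]
    norm_num
  rw [intervalIntegral.integral_eq_sub_of_hasDerivAt (fun c _ => hderiv c)
    (Continuous.intervalIntegrable (by fun_prop) _ _), hpow]
  obtain ⟨s, hs⟩ : ∃ s, s = √p := ⟨_, rfl⟩
  rw [← hs, ← Real.sq_sqrt hp, ← hs]
  ring

lemma setLIntegral_mul_sub_sq {p q : ℝ} (hp : 0 ≤ p) (hpq : p ≤ q) :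
    ∫⁻ c in {c : ℝ | c ^ 2 < p}, ENNReal.ofReal ((p - c ^ 2) * (q - c ^ 2)) =
      ENNReal.ofReal (4 / 15 * p ^ ((3 : ℝ) / 2) * (5 * q - p)) := by
  have hset : {c : ℝ | c ^ 2 < p} = Set.Ioo (-√p) √p := Set.ext fun c => Real.sq_lt
  have hcont : Continuous fun c : ℝ => (p - c ^ 2) * (q - c ^ 2) := by fun_prop
  have hnonneg : ∀ c ∈ {c : ℝ | c ^ 2 < p}, 0 ≤ (p - c ^ 2) * (q - c ^ 2) := fun c hc =>
    mul_nonneg (sub_nonneg.2 (le_of_lt hc)) (sub_nonneg.2 ((le_of_lt hc).trans hpq))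
  rw [hset] at hnonneg ⊢
  rw [← integral_mul_sub_sq hp, intervalIntegral.integral_of_le (by linarith [Real.sqrt_nonneg p]),
    integral_Ioc_eq_integral_Ioo, ofReal_integral_eq_lintegral_ofReal]
  · exact hcont.integrableOn_Icc.mono_set Set.Ioo_subset_Icc_self
  · exact ae_restrict_of_forall_mem measurableSet_Ioo hnonneg

lemma ae_sq_ne (p : ℝ) : ∀ᵐ c : ℝ, c ^ 2 ≠ p := by
  refine measure_eq_zero_iff_ae_notMem.1 (Set.Finite.measure_zero ?_ volume)
  refine (Set.toFinite {√p, -√p}).subset ?_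
  rintro c rfl
  simpa [Real.sqrt_sq_eq_abs] using abs_eq_abs.1 (abs_abs c).symm

lemma volume_coupledCompletions {a f a' f' : ℝ} (ha : 0 ≤ a) (hf : 0 ≤ f) (ha' : 0 ≤ a')
    (hf' : 0 ≤ f') :
    volume (coupledCompletions a f a' f') =
      ENNReal.ofReal (8 / 45 * π ^ 2 * min (a * f) (a' * f') ^ ((3 : ℝ) / 2) *
        (5 * max (a * f) (a' * f') - min (a * f) (a' * f'))) := by
  set p := min (a * f) (a' * f')
  set q := max (a * f) (a' * f')
  have hp : 0 ≤ p := le_min (by positivity) (by positivity)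
  have hpq : p ≤ q := min_le_max
  have hprod (c : ℝ) : (a * f - c ^ 2) * (a' * f' - c ^ 2) = (p - c ^ 2) * (q - c ^ 2) := by
    linear_combination c ^ 2 * min_add_max (a * f) (a' * f') - min_mul_max (a * f) (a' * f')
  have hslice : ∀ᵐ c : ℝ, volume (Prod.mk c ⁻¹' coupledCompletions a f a' f') =
      {c : ℝ | c ^ 2 < p}.indicator
        (fun c => ENNReal.ofReal (2 * π ^ 2 / 3) * ENNReal.ofReal ((p - c ^ 2) * (q - c ^ 2)))
        c := by
    filter_upwards [ae_sq_ne p] with c hc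
    by_cases hcp : c ^ 2 < p
    · obtain ⟨hA, hB⟩ := lt_min_iff.1 hcp
      rw [Set.indicator_of_mem (by exact hcp), volume_mk_preimage_coupledCompletions ha ha' hA hB,
        hprod, ENNReal.ofReal_mul (by positivity)]
    · have hempty : Prod.mk c ⁻¹' coupledCompletions a f a' f' = ∅ :=
        Set.eq_empty_of_forall_notMem fun _ hK =>
          hcp ((sq_le_min_of_mem_coupledCompletions hK).lt_of_ne hc)
      rw [Set.indicator_of_notMem (by exact hcp), hempty, measure_empty]
  calc volume (coupledCompletions a f a' f')
      = ∫⁻ c, volume (Prod.mk c ⁻¹' coupledCompletions a f a' f') :=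
        Measure.prod_apply (measurableSet_coupledCompletions a f a' f')
    _ = ENNReal.ofReal (2 * π ^ 2 / 3) *
          ∫⁻ c in {c : ℝ | c ^ 2 < p}, ENNReal.ofReal ((p - c ^ 2) * (q - c ^ 2)) := by
        rw [lintegral_congr_ae hslice,
          lintegral_indicator (measurableSet_lt (by fun_prop) measurable_const),
          lintegral_const_mul _ (by fun_prop)]
    _ = ENNReal.ofReal (8 / 45 * π ^ 2 * p ^ ((3 : ℝ) / 2) * (5 * q - p)) := by
        rw [setLIntegral_mul_sub_sq hp hpq, ← ENNReal.ofReal_mul (by positivity)]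
        congr 1
        ring

/-- The coordinates `(c, [[b, d], [e, g]])` of a parameter `w = (b, c, d, e, g)` of `choiRaf`: the
entry shared by the diagonal blocks, and the off-diagonal block in the basis order `0, 2, 1, 3`. -/
def choiBlockCoords (w : Fin 5 → ℝ) : ℝ × (Fin 2 × Fin 2 → ℝ) :=
  (w 1, fun p => w (Fin.succAbove 1 (finProdFinEquiv p)))

lemma volume_preserving_choiBlockCoords : MeasurePreserving choiBlockCoords :=
  ((MeasurePreserving.id volume).prod (volume_preserving_arrowCongr'
    (finProdFinEquiv (m := 2) (n := 2)).symm (.refl ℝ) (.id volume))).comp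
      (volume_preserving_piFinSuccAbove (fun _ : Fin 5 => ℝ) 1)

lemma posSemidef_choiRaf_iff {a f : ℝ} {w : Fin 5 → ℝ} :
    (choiRaf a f w).PosSemidef ↔
      choiBlockCoords w ∈ coupledCompletions a f (1 - a) (1 - f) := by
  let e : Fin 2 ⊕ Fin 2 ≃ Fin 4 := finSumFinEquiv.trans (Equiv.swap 1 2)
  let K : Matrix (Fin 2) (Fin 2) ℝ := of (Function.curry (choiBlockCoords w).2)
  have hblocks : (choiRaf a f w).submatrix e e =
      fromBlocks !![a, w 1; w 1, f] K Kᵀ !![1 - a, -w 1; -w 1, 1 - f] := by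
    ext (i | i) (j | j) <;> fin_cases i <;> fin_cases j <;> rfl
  rw [← posSemidef_submatrix_equiv e, hblocks]
  rfl

lemma volume_setOf_posSemidef_choiRaf (a f : ℝ) :
    volume {w : Fin 5 → ℝ | (choiRaf a f w).PosSemidef} =
      volume (coupledCompletions a f (1 - a) (1 - f)) := by
  rw [← volume_preserving_choiBlockCoords.measure_preimage
    (measurableSet_coupledCompletions _ _ _ _).nullMeasurableSet]
  simp only [posSemidef_choiRaf_iff]
  rfl

/-- The fibre volume of real qubit channels over the classical channel `(a,f)`:
`V(a,f) = (128/45)π² (af)^{3/2}(5(1-a)(1-f) - af)` if `a+f < 1`, and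
`V(a,f) = (128/45)π² ((1-a)(1-f))^{3/2}(5af - (1-a)(1-f))` if `a+f ≥ 1`. -/
theorem stmt_13 (a f : ℝ) (ha : a ∈ Set.Icc (0 : ℝ) 1) (hf : f ∈ Set.Icc (0 : ℝ) 1) :
    2 ^ 4 * volume {w : Fin 5 → ℝ | (choiRaf a f w).PosSemidef} =
      ENNReal.ofReal (if a + f < 1 then
          128 / 45 * π ^ 2 * (a * f) ^ ((3 : ℝ) / 2) * (5 * (1 - a) * (1 - f) - a * f)
        else
          128 / 45 * π ^ 2 * ((1 - a) * (1 - f)) ^ ((3 : ℝ) / 2) *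
            (5 * a * f - (1 - a) * (1 - f))) := by
  rw [volume_setOf_posSemidef_choiRaf,
    volume_coupledCompletions ha.1 hf.1 (sub_nonneg.2 ha.2) (sub_nonneg.2 hf.2),
    show (2 : ENNReal) ^ 4 = ENNReal.ofReal 16 by norm_num, ← ENNReal.ofReal_mul (by norm_num)]
  congr 1
  split_ifs with h
  · have hle : a * f ≤ (1 - a) * (1 - f) := by linarith
    rw [min_eq_left hle, max_eq_right hle]
    ring
  · have hle : (1 - a) * (1 - f) ≤ a * f := by linarith
    rw [min_eq_right hle, max_eq_left hle]
    ring
end
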